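/- arXiv:1703.00352 — 3 statements merged into one kernel-verified Lean document; each statement's English description precedes it below -/
import Mathlib

section
/- Let P be a probability measure on a measurable space Ω and let A, B, C be measurable events such that ⟨A, B, C⟩ is a conjunctive fork for (A, B). Then P(A ∩ B) − P(A)·P(B) > 0. -/
open MeasureTheory Finset

/-- The probability of an event, as a real number. -/
noncomputable def pr {Ω : Type*} [MeasurableSpace Ω] (P : Measure Ω) (X : Set Ω) : ℝ :=
  (P X).toReal

/-- Conditional probability `P(X | C) = P(X ∩ C) / P(C)`, as a real number. -/
noncomputable def cpr {Ω : Type*} [MeasurableSpace Ω] (P : Measure Ω) (X C : Set Ω) : ℝ :=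
  pr P (X ∩ C) / pr P C

/-!
Splitting over `C` and `Cᶜ` decomposes the covariance of two events into the average of the two
conditional covariances plus the covariance between the conditional probabilities. The latter is
a product of two differences because `C` and `Cᶜ` are the only two cells. Screening off kills the
conditional covariances, and the two fork inequalities make the remaining product positive.
-/

section TotalProbability

variable {Ω : Type*} [MeasurableSpace Ω] {P : Measure Ω} {C : Set Ω}

-- At `pr P C = 0` the junk value of `cpr` is harmless: `pr P (X ∩ C)` vanishes too.
lemma cpr_mul_pr [IsFiniteMeasure P] (X C : Set Ω) :
    cpr P X C * pr P C = pr P (X ∩ C) :=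
  div_mul_cancel_of_imp fun hC ↦ measureReal_mono_null Set.inter_subset_right hC

lemma pr_compl [IsProbabilityMeasure P] (hC : MeasurableSet C) : pr P Cᶜ = 1 - pr P C :=
  probReal_compl_eq_one_sub hC

theorem law_of_total_probability [IsFiniteMeasure P] (X : Set Ω) (hC : MeasurableSet C) :
    pr P X = cpr P X C * pr P C + cpr P X Cᶜ * pr P Cᶜ := by
  rw [cpr_mul_pr, cpr_mul_pr, ← Set.sdiff_eq]
  exact (measureReal_inter_add_sdiff hC).symm

theorem law_of_total_covariance [IsProbabilityMeasure P] (A B : Set Ω) (hC : MeasurableSet C) :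
    pr P (A ∩ B) - pr P A * pr P B =
      pr P C * (cpr P (A ∩ B) C - cpr P A C * cpr P B C) +
        pr P Cᶜ * (cpr P (A ∩ B) Cᶜ - cpr P A Cᶜ * cpr P B Cᶜ) +
        pr P C * pr P Cᶜ * ((cpr P A C - cpr P A Cᶜ) * (cpr P B C - cpr P B Cᶜ)) := by
  rw [law_of_total_probability (A ∩ B) hC, law_of_total_probability A hC,
    law_of_total_probability B hC, pr_compl hC]
  ring

end TotalProbability

/-- If `⟨A, B, C⟩` is a conjunctive fork for `(A, B)`, then `A` and `B` are
positively correlated: `P(A ∩ B) - P(A)·P(B) > 0`. -/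
theorem stmt_0 {Ω : Type*} [MeasurableSpace Ω] (P : Measure Ω) [IsProbabilityMeasure P]
    (A B C : Set Ω) (hA : MeasurableSet A) (hB : MeasurableSet B) (hC : MeasurableSet C)
    (hAB : A ≠ B) (hAC : A ≠ C) (hBC : B ≠ C)
    (hC0 : 0 < pr P C) (hC1 : pr P C < 1)
    (hscreenC : cpr P (A ∩ B) C = cpr P A C * cpr P B C)
    (hscreenCc : cpr P (A ∩ B) Cᶜ = cpr P A Cᶜ * cpr P B Cᶜ)
    (hAfork : cpr P A Cᶜ < cpr P A C)
    (hBfork : cpr P B Cᶜ < cpr P B C) :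
    0 < pr P (A ∩ B) - pr P A * pr P B := by
  have hCc : 0 < pr P Cᶜ := by
    rw [pr_compl hC]
    exact sub_pos.2 hC1
  rw [law_of_total_covariance A B hC, sub_eq_zero.2 hscreenC, sub_eq_zero.2 hscreenCc,
    mul_zero, mul_zero, zero_add, zero_add]
  exact mul_pos (mul_pos hC0 hCc) (mul_pos (sub_pos.2 hAfork) (sub_pos.2 hBfork))
end

section
/- Let P be a probability measure on a measurable space Ω, let A, B be measurable events, let n ≥ 2, and let {C_1, …, C_n} be a finite measurable partition of Ω with P(C_i) > 0 for every i, satisfying the screening-off condition P(A ∩ B|C_i) = P(A|C_i)·P(B|C_i) for every i = 1, …, n. Then P(A ∩ B) − P(A)·P(B) = (1/2)·Σ_{i,j=1}^{n} P(C_i)·P(C_j)·[P(A|C_i) − P(A|C_j)]·[P(B|C_i) − P(B|C_j)]. -/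
open MeasureTheory Finset

/-!
The covariance of two events splits along a finite partition into a within-cell part, the average of
the conditional covariances, and a between-cell part, the covariance of the conditional
probabilities under the cell weights. Screening off kills the within-cell part, and the covariance
under finitely many weights is half the weighted sum of products of pairwise differences.
-/

theorem sum_sum_mul_sub_mul_sub {ι R : Type*} [CommRing R] (s : Finset ι) (w f g : ι → R) :
    ∑ i ∈ s, ∑ j ∈ s, w i * w j * (f i - f j) * (g i - g j) =
      2 * ((∑ i ∈ s, w i) * ∑ i ∈ s, w i * (f i * g i) -
        (∑ i ∈ s, w i * f i) * ∑ i ∈ s, w i * g i) := by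
  have expand (i j : ι) : w i * w j * (f i - f j) * (g i - g j) =
      w i * (f i * g i) * w j + w i * (w j * (f j * g j)) -
        w i * f i * (w j * g j) - w i * g i * (w j * f j) := by
    ring
  simp only [expand, sum_add_distrib, sum_sub_distrib, ← mul_sum, ← sum_mul]
  ring

section FiniteMeasure

variable {Ω : Type*} [MeasurableSpace Ω] (P : Measure Ω) [IsFiniteMeasure P]

theorem pr_mul_cpr (X C : Set Ω) : pr P C * cpr P X C = pr P (X ∩ C) :=
  mul_div_cancel_of_imp' fun hC => measureReal_mono_null Set.inter_subset_right hC

theorem pr_eq_sum_pr_inter {ι : Type*} [Fintype ι] {C : ι → Set Ω}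
    (hCmeas : ∀ i, MeasurableSet (C i)) (hCdisj : Pairwise fun i j => Disjoint (C i) (C j))
    (hCcover : (⋃ i, C i) = Set.univ) (X : Set Ω) :
    pr P X = ∑ i, pr P (X ∩ C i) := by
  -- Restricting `P` to `X` makes additivity over the cells available for any set `X`.
  calc pr P X = (P.restrict X).real (⋃ i, C i) := by
        rw [hCcover, measureReal_restrict_apply_univ, pr, measureReal_def]
    _ = ∑ i, (P.restrict X).real (C i) := measureReal_iUnion_fintype hCdisj hCmeas
    _ = ∑ i, pr P (X ∩ C i) := by
        simp only [measureReal_restrict_apply (hCmeas _), Set.inter_comm, pr, measureReal_def]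

theorem pr_eq_sum_pr_mul_cpr {ι : Type*} [Fintype ι] {C : ι → Set Ω}
    (hCmeas : ∀ i, MeasurableSet (C i)) (hCdisj : Pairwise fun i j => Disjoint (C i) (C j))
    (hCcover : (⋃ i, C i) = Set.univ) (X : Set Ω) :
    pr P X = ∑ i, pr P (C i) * cpr P X (C i) := by
  simp only [pr_mul_cpr, pr_eq_sum_pr_inter P hCmeas hCdisj hCcover X]

end FiniteMeasure

theorem sum_pr_eq_one {Ω ι : Type*} [MeasurableSpace Ω] [Fintype ι] (P : Measure Ω)
    [IsProbabilityMeasure P] {C : ι → Set Ω} (hCmeas : ∀ i, MeasurableSet (C i))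
    (hCdisj : Pairwise fun i j => Disjoint (C i) (C j)) (hCcover : (⋃ i, C i) = Set.univ) :
    ∑ i, pr P (C i) = 1 := by
  simpa only [Set.univ_inter] using
    (pr_eq_sum_pr_inter P hCmeas hCdisj hCcover Set.univ).symm.trans probReal_univ

theorem stmt_2_general {Ω ι : Type*} [MeasurableSpace Ω] [Fintype ι] (P : Measure Ω)
    [IsProbabilityMeasure P] (A B : Set Ω) {C : ι → Set Ω} (hCmeas : ∀ i, MeasurableSet (C i))
    (hCdisj : Pairwise fun i j => Disjoint (C i) (C j)) (hCcover : (⋃ i, C i) = Set.univ) :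
    pr P (A ∩ B) - pr P A * pr P B =
      ∑ i, pr P (C i) * (cpr P (A ∩ B) (C i) - cpr P A (C i) * cpr P B (C i)) +
      (1 / 2) * ∑ i, ∑ j, pr P (C i) * pr P (C j) *
          (cpr P A (C i) - cpr P A (C j)) * (cpr P B (C i) - cpr P B (C j)) := by
  have total := pr_eq_sum_pr_mul_cpr P hCmeas hCdisj hCcover
  rw [sum_sum_mul_sub_mul_sub, sum_pr_eq_one P hCmeas hCdisj hCcover, ← total A, ← total B,
    total (A ∩ B)]
  simp only [mul_sub, sum_sub_distrib]
  ring

/-- If a finite measurable partition with positive-probability cells screens off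
`A` from `B`, then the correlation is given by the double-sum formula. -/
theorem stmt_2 {Ω : Type*} [MeasurableSpace Ω] (P : Measure Ω) [IsProbabilityMeasure P]
    (A B : Set Ω) (hA : MeasurableSet A) (hB : MeasurableSet B)
    (n : ℕ) (hn : 2 ≤ n) (C : Fin n → Set Ω) (hCmeas : ∀ i, MeasurableSet (C i))
    (hCdisj : Pairwise fun i j => Disjoint (C i) (C j))
    (hCcover : (⋃ i, C i) = Set.univ)
    (hCpos : ∀ i, 0 < pr P (C i))
    (hscreen : ∀ i, cpr P (A ∩ B) (C i) = cpr P A (C i) * cpr P B (C i)) :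
    pr P (A ∩ B) - pr P A * pr P B =
      (1 / 2) * ∑ i, ∑ j, pr P (C i) * pr P (C j) *
          (cpr P A (C i) - cpr P A (C j)) * (cpr P B (C i) - cpr P B (C j)) := by
  simp only [stmt_2_general P A B hCmeas hCdisj hCcover, hscreen, sub_self, mul_zero,
    sum_const_zero, zero_add]
end

section
/- Let P be a probability measure on a measurable space Ω and let A, B be measurable events with P(A ∩ B) > P(A)·P(B). Then for every integer n ≥ 2 there exists a set of real numbers {a_i, b_i, c_i, d_i : i = 1, …, n} that is admissible* for (A, B). -/
open MeasureTheory Finset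

/-- A set of real numbers `{a_i, b_i, c_i, d_i : i = 1, …, n}` is admissible* for a
pair of events with probabilities `pA = P(A)` and `pB = P(B)`. -/
def AdmissibleStar (pA pB : ℝ) {n : ℕ} (a b c d : Fin n → ℝ) : Prop :=
  (∑ i, a i * c i) = pA ∧
  (∑ i, b i * c i) = pB ∧
  (∑ i, c i) = 1 ∧
  (∀ i, d i = a i * b i) ∧
  (∀ i j, i ≠ j → 0 < (a i - a j) * (b i - b j)) ∧
  (∀ i, 0 < a i ∧ a i < 1) ∧
  (∀ i, 0 < b i ∧ b i < 1) ∧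
  (∀ i, 0 < d i ∧ d i < 1) ∧
  (∀ i, 0 < c i ∧ c i < 1)

/-!
Positive correlation forces `P(A), P(B) ∈ (0, 1)`. Given any weights `c`, spread both numbers along
one and the same injective family `t` with `∑ t i * c i = 0`: put `a i = P(A) + ε * t i` and
`b i = P(B) + ε * t i`. The means are right, the products of differences are the squares
`(ε * (t i - t j)) ^ 2`, and all values lie in `(0, 1)` once `ε > 0` is small.
-/

section Probability

variable {Ω : Type*} [MeasurableSpace Ω] {P : Measure Ω} [IsFiniteMeasure P] {A B : Set Ω}

theorem pr_left_mem_Ioo_of_mul_lt_pr_inter (hcorr : pr P A * pr P B < pr P (A ∩ B)) :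
    pr P A ∈ Set.Ioo 0 1 := by
  have hA : 0 ≤ pr P A := measureReal_nonneg
  have hB : 0 ≤ pr P B := measureReal_nonneg
  have hAB_le_A : pr P (A ∩ B) ≤ pr P A := measureReal_mono Set.inter_subset_left
  have hAB_le_B : pr P (A ∩ B) ≤ pr P B := measureReal_mono Set.inter_subset_right
  constructor
  · calc
      0 ≤ pr P A * pr P B := mul_nonneg hA hB
      _ < pr P (A ∩ B) := hcorr
      _ ≤ pr P A := hAB_le_A
  · have : pr P A * pr P B < 1 * pr P B := by
      simpa only [one_mul] using hcorr.trans_le hAB_le_B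
    exact lt_of_mul_lt_mul_right this hB

theorem pr_right_mem_Ioo_of_mul_lt_pr_inter (hcorr : pr P A * pr P B < pr P (A ∩ B)) :
    pr P B ∈ Set.Ioo 0 1 := by
  rw [mul_comm, Set.inter_comm] at hcorr
  exact pr_left_mem_Ioo_of_mul_lt_pr_inter hcorr

end Probability

section WeightedMean

variable {ι R : Type*} [Fintype ι] [CommRing R] {c : ι → R}

theorem sum_sub_weighted_mean_mul_eq_zero (hc : ∑ i, c i = 1) (v : ι → R) :
    ∑ i, (v i - ∑ j, v j * c j) * c i = 0 := by
  simp only [sub_mul, sum_sub_distrib, ← mul_sum, hc, mul_one, sub_self]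

theorem sum_add_mul_mul_eq_of_sum_mul_eq_zero (hc : ∑ i, c i = 1) {t : ι → R}
    (ht : ∑ i, t i * c i = 0) (x ε : R) : ∑ i, (x + ε * t i) * c i = x := by
  simp only [add_mul, sum_add_distrib, mul_assoc, ← mul_sum, hc, ht, mul_one, mul_zero, add_zero]

theorem exists_injective_sum_mul_eq_zero [CharZero R] {n : ℕ} {c : Fin n → R}
    (hc : ∑ i, c i = 1) : ∃ t : Fin n → R, Function.Injective t ∧ ∑ i, t i * c i = 0 :=
  ⟨fun i ↦ (i : R) - ∑ j : Fin n, (j : R) * c j,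
    fun _ _ hij ↦ Fin.ext (Nat.cast_injective (sub_left_injective hij)),
    sum_sub_weighted_mean_mul_eq_zero hc _⟩

end WeightedMean

open Filter Topology in
theorem eventually_forall_add_smul_mem {𝕜 E ι : Type*} [Finite ι] [Semiring 𝕜]
    [TopologicalSpace 𝕜] [AddCommMonoid E] [TopologicalSpace E] [ContinuousAdd E] [Module 𝕜 E]
    [ContinuousSMul 𝕜 E] {s : Set E} {x : E} (hs : s ∈ 𝓝 x) (t : ι → E) :
    ∀ᶠ ε : 𝕜 in 𝓝 0, ∀ i, x + ε • t i ∈ s := by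
  refine eventually_all.2 fun i ↦ ?_
  have hcont : Continuous fun ε : 𝕜 ↦ x + ε • t i := by fun_prop
  exact hcont.tendsto' 0 x (by simp) hs

open Filter Topology in
theorem exists_pos_forall_add_mul_mem_Ioo {ι : Type*} [Finite ι] {p q : ℝ}
    (hp : p ∈ Set.Ioo 0 1) (hq : q ∈ Set.Ioo 0 1) (t : ι → ℝ) :
    ∃ ε > 0, (∀ i, p + ε * t i ∈ Set.Ioo 0 1) ∧ ∀ i, q + ε * t i ∈ Set.Ioo 0 1 := by
  have hsmall {x : ℝ} (hx : x ∈ Set.Ioo 0 1) : ∀ᶠ ε in 𝓝[>] 0, ∀ i, x + ε * t i ∈ Set.Ioo 0 1 :=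
    (eventually_forall_add_smul_mem (isOpen_Ioo.mem_nhds hx) t).filter_mono nhdsWithin_le_nhds
  obtain ⟨ε, ⟨hεp, hεq⟩, hε⟩ :=
    (((hsmall hp).and (hsmall hq)).and self_mem_nhdsWithin).exists
  exact ⟨ε, hε, hεp, hεq⟩

theorem exists_admissibleStar_of_weights {p q : ℝ} (hp : p ∈ Set.Ioo 0 1) (hq : q ∈ Set.Ioo 0 1)
    {n : ℕ} {c : Fin n → ℝ} (hc : ∀ i, c i ∈ Set.Ioo 0 1) (hc_sum : ∑ i, c i = 1) :
    ∃ a b d : Fin n → ℝ, AdmissibleStar p q a b c d := by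
  obtain ⟨t, ht_inj, ht_sum⟩ := exists_injective_sum_mul_eq_zero hc_sum
  obtain ⟨ε, hε, ha, hb⟩ := exists_pos_forall_add_mul_mem_Ioo hp hq t
  have hmean (x : ℝ) := sum_add_mul_mul_eq_of_sum_mul_eq_zero hc_sum ht_sum x ε
  have hcomonotone (i j : Fin n) (hij : i ≠ j) :
      0 < (p + ε * t i - (p + ε * t j)) * (q + ε * t i - (q + ε * t j)) := by
    have ht : t i - t j ≠ 0 := sub_ne_zero.2 (ht_inj.ne hij)
    calc
      0 < (ε * (t i - t j)) ^ 2 := by positivity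
      _ = (p + ε * t i - (p + ε * t j)) * (q + ε * t i - (q + ε * t j)) := by ring
  have hd (i : Fin n) : 0 < (p + ε * t i) * (q + ε * t i) ∧ (p + ε * t i) * (q + ε * t i) < 1 :=
    ⟨mul_pos (ha i).1 (hb i).1,
      mul_lt_one_of_nonneg_of_lt_one_left (ha i).1.le (ha i).2 (hb i).2.le⟩
  exact ⟨fun i ↦ p + ε * t i, fun i ↦ q + ε * t i, fun i ↦ (p + ε * t i) * (q + ε * t i),
    hmean p, hmean q, hc_sum, fun _ ↦ rfl, hcomonotone, ha, hb, hd, hc⟩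

theorem stmt_9_general {p q : ℝ} (hp : p ∈ Set.Ioo 0 1) (hq : q ∈ Set.Ioo 0 1) {n : ℕ}
    (hn : 2 ≤ n) : ∃ a b c d : Fin n → ℝ, AdmissibleStar p q a b c d := by
  have hn' : (1 : ℝ) < n := by exact_mod_cast hn
  have hweight : (n : ℝ)⁻¹ ∈ Set.Ioo 0 1 := ⟨by positivity, inv_lt_one_of_one_lt₀ hn'⟩
  have hweight_sum : ∑ _i : Fin n, (n : ℝ)⁻¹ = 1 := by
    rw [Fin.sum_const, nsmul_eq_mul, mul_inv_cancel₀ (by positivity)]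
  obtain ⟨a, b, d, h⟩ := exists_admissibleStar_of_weights hp hq (fun _ ↦ hweight) hweight_sum
  exact ⟨a, b, _, d, h⟩

/-- Lemma 3 of the text: for every positively correlated pair `(A, B)` and every
`n ≥ 2`, an admissible* set of numbers for `(A, B)` exists. -/
theorem stmt_9 {Ω : Type*} [MeasurableSpace Ω] (P : Measure Ω) [IsProbabilityMeasure P]
    (A B : Set Ω) (hA : MeasurableSet A) (hB : MeasurableSet B)
    (hcorr : pr P A * pr P B < pr P (A ∩ B)) :
    ∀ n : ℕ, 2 ≤ n → ∃ a b c d : Fin n → ℝ,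
      AdmissibleStar (pr P A) (pr P B) a b c d :=
  fun _ hn ↦ stmt_9_general (pr_left_mem_Ioo_of_mul_lt_pr_inter hcorr)
    (pr_right_mem_Ioo_of_mul_lt_pr_inter hcorr) hn
end
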